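/- Let H be a Hilbert space, A : H → H a compact self-adjoint continuous linear operator, μ and α > 0 real numbers, and u ∈ H with ‖u‖ = 1 such that ‖A u − μ u‖ ≤ α. Then for every d > α there exists a vector ū ∈ H with ‖ū‖ = 1 and ‖u − ū‖ ≤ 2α/d such that ū belongs to the closure of the linear span of all eigenvectors of A whose eigenvalues lie in the segment [μ − d, μ + d]. -/

import Mathlib

/-!
Expand `u` as an orthogonal sum of vectors `w t`, one in each eigenspace of `A`, so that
`A u - μ u` is the orthogonal sum of the `(t - μ) w t`. Let `p` collect the terms with
`|t - μ| ≤ d`. By Pythagoras the remaining terms satisfy `d ‖u - p‖ ≤ ‖A u - μ u‖ ≤ α < d`. Hence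
`‖u - p‖ ≤ α / d < 1`, so that `p ≠ 0`, and dividing `p` by its norm at most doubles its distance
to the unit vector `u`.
-/

open Module.End

section OrthogonalSums

variable {𝕜 H : Type*} [RCLike 𝕜] [NormedAddCommGroup H] [InnerProductSpace 𝕜 H]
  {ι : Type*} {G : ι → Type*} [∀ i, NormedAddCommGroup (G i)] [∀ i, InnerProductSpace 𝕜 (G i)]
  {V : ∀ i, G i →ₗᵢ[𝕜] H}

theorem hasSum_norm_sq_of_orthogonalFamily (hV : OrthogonalFamily 𝕜 G V) {w : ∀ i, G i} {x : H}
    (hx : HasSum (fun i ↦ V i (w i)) x) : HasSum (fun i ↦ ‖w i‖ ^ 2) (‖x‖ ^ 2) :=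
  (hx.norm.pow 2).congr fun s ↦ hV.norm_sum w s

theorem mul_norm_le_norm_of_hasSum_smul (hV : OrthogonalFamily 𝕜 G V) {w : ∀ i, G i} {c : ι → 𝕜}
    {s : Set ι} {d : ℝ} (hd : 0 ≤ d) (hc : ∀ i ∈ s, d ≤ ‖c i‖) {x y : H}
    (hx : HasSum (fun i : s ↦ V i (w i)) x) (hy : HasSum (fun i ↦ V i (c i • w i)) y) :
    d * ‖x‖ ≤ ‖y‖ := by
  have hx_sq : HasSum (fun i : s ↦ d ^ 2 * ‖w i‖ ^ 2) (d ^ 2 * ‖x‖ ^ 2) :=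
    (hasSum_norm_sq_of_orthogonalFamily (hV.comp Subtype.val_injective) hx).mul_left _
  have hy_sq : HasSum (fun i ↦ ‖c i • w i‖ ^ 2) (‖y‖ ^ 2) :=
    hasSum_norm_sq_of_orthogonalFamily hV hy
  have hterm (i : s) : d ^ 2 * ‖w i‖ ^ 2 ≤ ‖c i • w i‖ ^ 2 := by
    rw [norm_smul, mul_pow]
    gcongr
    exact hc i i.2
  refine (sq_le_sq₀ (by positivity) (norm_nonneg y)).1 ?_
  rw [mul_pow]
  exact hasSum_le_inj _ Subtype.val_injective (fun i _ ↦ by positivity) hterm hx_sq hy_sq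

end OrthogonalSums

section Normalization

variable {𝕜 E : Type*} [RCLike 𝕜] [NormedAddCommGroup E] [NormedSpace 𝕜 E]

theorem norm_sub_inv_norm_smul_self {p : E} (hp : p ≠ 0) :
    ‖p - (‖p‖⁻¹ : 𝕜) • p‖ = |‖p‖ - 1| := by
  have hp_norm : ‖p‖ ≠ 0 := norm_ne_zero_iff.2 hp
  have hfactor : p - (‖p‖⁻¹ : 𝕜) • p = ((1 - ‖p‖⁻¹ : ℝ) : 𝕜) • p := by
    push_cast
    rw [sub_smul, one_smul]
  calc ‖p - (‖p‖⁻¹ : 𝕜) • p‖ = |1 - ‖p‖⁻¹| * |‖p‖| := by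
        rw [hfactor, norm_smul, RCLike.norm_ofReal, abs_norm]
    _ = |‖p‖ - 1| := by rw [← abs_mul, sub_mul, one_mul, inv_mul_cancel₀ hp_norm]

theorem norm_sub_inv_norm_smul_le {u p : E} (hu : ‖u‖ = 1) (hp : p ≠ 0) :
    ‖u - (‖p‖⁻¹ : 𝕜) • p‖ ≤ 2 * ‖u - p‖ := by
  have hnormalize : ‖p - (‖p‖⁻¹ : 𝕜) • p‖ ≤ ‖u - p‖ := by
    rw [norm_sub_inv_norm_smul_self hp, ← hu, norm_sub_rev u p]
    exact abs_norm_sub_norm_le p u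
  linarith [norm_sub_le_norm_sub_add_norm_sub u p ((‖p‖⁻¹ : 𝕜) • p)]

end Normalization

section Eigenspaces

theorem eigenspace_le_span_eigenvectors {R M : Type*} [CommRing R] [AddCommGroup M] [Module R M]
    (f : Module.End R M) {s : Set R} {t : R} (ht : t ∈ s) :
    eigenspace f t ≤ Submodule.span R {v : M | v ≠ 0 ∧ ∃ r ∈ s, f v = r • v} := by
  intro v hv
  rcases eq_or_ne v 0 with rfl | hv_ne
  · exact zero_mem _
  · exact Submodule.subset_span ⟨hv_ne, t, ht, mem_eigenspace_iff.1 hv⟩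

theorem hasSum_sub_smul_of_eigenvectors {R M : Type*} [CommRing R] [AddCommGroup M] [Module R M]
    [TopologicalSpace M] [IsTopologicalAddGroup M] [ContinuousConstSMul R M] {T : M →L[R] M}
    {w : ∀ t, eigenspace (T : Module.End R M) t} {u : M} (hw : HasSum (fun t ↦ (w t : M)) u)
    (μ : R) : HasSum (fun t ↦ (((t - μ) • w t : eigenspace (T : Module.End R M) t) : M))
      (T u - μ • u) := by
  refine ((hw.mapL T).sub (hw.const_smul μ)).congr_fun fun t ↦ ?_
  rw [Submodule.coe_smul, sub_smul, ← mem_eigenspace_iff.1 (w t).2, ContinuousLinearMap.coe_coe]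

variable {𝕜 H : Type*} [RCLike 𝕜] [NormedAddCommGroup H] [InnerProductSpace 𝕜 H] [CompleteSpace H]
  {T : H →L[𝕜] H}

/-- `T` is orthogonally diagonalizable: the space is the Hilbert sum of the eigenspaces of `T`, that
is, these are pairwise orthogonal and their span is dense. This is what the spectral theorem
provides for compact self-adjoint operators. -/
def IsOrthogonallyDiagonalizable (T : H →L[𝕜] H) : Prop :=
  IsHilbertSum 𝕜 (fun t : 𝕜 ↦ eigenspace (T : Module.End 𝕜 H) t)
    fun t ↦ (eigenspace (T : Module.End 𝕜 H) t).subtypeₗᵢ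

theorem isOrthogonallyDiagonalizable_of_isCompactOperator (hT : IsCompactOperator T)
    (hsymm : T.IsSymmetric) : IsOrthogonallyDiagonalizable T := by
  have hcomplete (t : 𝕜) : CompleteSpace (eigenspace (T : Module.End 𝕜 H) t) :=
    (T.isClosed_eigenspace t).completeSpace_coe
  refine .mkInternal _ hsymm.orthogonalFamily_eigenspaces ?_
  rw [Submodule.topologicalClosure_eq_top_iff.2
    (T.orthogonalComplement_iSup_eigenspaces_eq_bot hT hsymm)]

theorem IsOrthogonallyDiagonalizable.exists_hasSum (hT : IsOrthogonallyDiagonalizable T) (u : H) :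
    ∃ w : ∀ t, eigenspace (T : Module.End 𝕜 H) t, HasSum (fun t ↦ (w t : H)) u := by
  obtain ⟨w, rfl⟩ := hT.linearIsometryEquiv.symm.surjective u
  exact ⟨w, hT.hasSum_linearIsometryEquiv_symm w⟩

theorem IsOrthogonallyDiagonalizable.exists_mem_closure_span_mul_norm_sub_le
    (hT : IsOrthogonallyDiagonalizable T) {s : Set 𝕜} {μ : 𝕜} {d : ℝ} (hd : 0 ≤ d)
    (hs : ∀ t ∉ s, d ≤ ‖t - μ‖) (u : H) :
    ∃ p ∈ closure (Submodule.span 𝕜 {v : H | v ≠ 0 ∧ ∃ t ∈ s, T v = t • v} : Set H),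
      d * ‖u - p‖ ≤ ‖T u - μ • u‖ := by
  obtain ⟨w, hw⟩ := hT.exists_hasSum u
  have hw_compl : HasSum (fun t : ↑sᶜ ↦ (w t : H)) (u - ∑' t : s, (w t : H)) := by
    have hsplit : ∑' t : s, (w t : H) + ∑' t : ↑sᶜ, (w t : H) = u :=
      ((hw.summable.subtype s).tsum_add_tsum_compl (hw.summable.subtype sᶜ)).trans hw.tsum_eq
    rw [← hsplit, add_sub_cancel_left]
    exact (hw.summable.subtype sᶜ).hasSum
  refine ⟨∑' t : s, (w t : H), ?_, ?_⟩
  · exact tsum_mem (Submodule.isClosed_topologicalClosure _) fun t : s ↦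
      Submodule.le_topologicalClosure _ (eigenspace_le_span_eigenvectors _ t.2 (w t).2)
  · exact mul_norm_le_norm_of_hasSum_smul hT.OrthogonalFamily hd hs hw_compl
      (hasSum_sub_smul_of_eigenvectors hw μ)

theorem exists_near_unit_vector_in_span_of_eigenvectors_general
    (hT : IsOrthogonallyDiagonalizable T)
    {μ : 𝕜} {α d : ℝ} (hd : α < d) {u : H} (hu : ‖u‖ = 1) (hclose : ‖T u - μ • u‖ ≤ α) :
    ∃ ubar : H, ‖ubar‖ = 1 ∧ ‖u - ubar‖ ≤ 2 * α / d ∧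
      ubar ∈ closure (Submodule.span 𝕜
        {v : H | v ≠ 0 ∧ ∃ t ∈ Metric.closedBall μ d, T v = t • v} : Set H) := by
  have hd_pos : 0 < d := (norm_nonneg _).trans_lt (hclose.trans_lt hd)
  have hfar (t : 𝕜) (ht : t ∉ Metric.closedBall μ d) : d ≤ ‖t - μ‖ :=
    (not_le.1 (mem_closedBall_iff_norm.not.1 ht)).le
  obtain ⟨p, hp_mem, hp_dist⟩ := hT.exists_mem_closure_span_mul_norm_sub_le hd_pos.le hfar u
  have hdist : ‖u - p‖ ≤ α / d := (le_div_iff₀' hd_pos).2 (hp_dist.trans hclose)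
  have hp : p ≠ 0 := by
    rintro rfl
    rw [sub_zero, hu, mul_one] at hp_dist
    linarith
  refine ⟨(‖p‖⁻¹ : 𝕜) • p, norm_smul_inv_norm hp, ?_, ?_⟩
  · calc ‖u - (‖p‖⁻¹ : 𝕜) • p‖ ≤ 2 * ‖u - p‖ := norm_sub_inv_norm_smul_le hu hp
      _ ≤ 2 * (α / d) := by gcongr
      _ = 2 * α / d := (mul_div_assoc _ _ _).symm
  · exact (Submodule.span 𝕜 _).topologicalClosure.smul_mem _ hp_mem

end Eigenspaces

/-- Vishik–Lyusternik lemma (second part, Lemma 3.3 of the paper): if `A` is a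
compact self-adjoint operator on a Hilbert space, `α > 0`, and `u` is a unit vector
with `‖A u - μ u‖ ≤ α`, then for every `d > α` there is a unit vector `ū` with
`‖u - ū‖ ≤ 2α/d` lying in the closed span of the eigenvectors of `A` whose
eigenvalues belong to the segment `[μ - d, μ + d]`. -/
theorem exists_near_unit_vector_in_span_of_eigenvectors
    {H : Type*} [NormedAddCommGroup H] [InnerProductSpace ℝ H] [CompleteSpace H]
    (A : H →L[ℝ] H) (hA : IsSelfAdjoint A) (hAcomp : IsCompactOperator A)
    (μ α : ℝ) (hα : 0 < α)
    (u : H) (hu : ‖u‖ = 1) (hclose : ‖A u - μ • u‖ ≤ α) :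
    ∀ d : ℝ, α < d →
      ∃ ubar : H, ‖ubar‖ = 1 ∧ ‖u - ubar‖ ≤ 2 * α / d ∧
        ubar ∈ closure (Submodule.span ℝ
          {v : H | v ≠ 0 ∧ ∃ t ∈ Set.Icc (μ - d) (μ + d), A v = t • v} : Set H) := by
  intro d hd
  rw [← Real.closedBall_eq_Icc]
  exact exists_near_unit_vector_in_span_of_eigenvectors_general
    (isOrthogonallyDiagonalizable_of_isCompactOperator hAcomp hA.isSymmetric) hd hu hclose
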